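/- (Corollary 1(a) of the paper.) There exists a constant c > 0, depending only on x_M, such that for every h with 0 < h ≤ 1, every d_o with 0 < d_o ≤ h, every continuous ζ: [0, x_M] → ℝ with 0 < ζ(x) ≤ d_o, every bounded measurable f: Ω_o → ℝ, and every function φ that is C¹ on a neighborhood of the closure of Ω_o, one has | ∫_{Ω_o} f φ | ≤ c · d_o · (sup_{Ω_o} |f|) · ( ∫_{Ω_o} |∇φ|² + (1/h) ∫_0^{x_M} φ(x,ζ(x))² dx )^{1/2}. -/

import Mathlib

open MeasureTheory Set

/-- Partial derivative of `φ : ℝ × ℝ → ℝ` with respect to the first variable. -/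
noncomputable def pdx (φ : ℝ × ℝ → ℝ) (p : ℝ × ℝ) : ℝ :=
  deriv (fun t => φ (t, p.2)) p.1

/-- Partial derivative of `φ : ℝ × ℝ → ℝ` with respect to the second variable. -/
noncomputable def pdy (φ : ℝ × ℝ → ℝ) (p : ℝ × ℝ) : ℝ :=
  deriv (fun t => φ (p.1, t)) p.2

/-- Squared Euclidean norm of the gradient of `φ : ℝ × ℝ → ℝ`. -/
noncomputable def gradSq (φ : ℝ × ℝ → ℝ) (p : ℝ × ℝ) : ℝ :=
  (pdx φ p) ^ 2 + (pdy φ p) ^ 2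

/-- The two-dimensional overlap region under the graph of `ζ`. -/
def ovl (xM : ℝ) (ζ : ℝ → ℝ) : Set (ℝ × ℝ) :=
  {p : ℝ × ℝ | 0 < p.1 ∧ p.1 < xM ∧ 0 < p.2 ∧ p.2 < ζ p.1}

/-! On a vertical segment, `φ(x,ζ(x)) - φ(x,y) = ∫_y^{ζ(x)} ∂_yφ`, so Cauchy–Schwarz gives
`∫_0^{ζ(x)} φ² dy ≤ 2 d_o φ(x,ζ(x))² + 2 d_o² ∫_0^{ζ(x)} (∂_yφ)² dy`. Integrating in `x`,
`∫_{Ω_o} φ² ≤ 2 d_o (T + d_o ∫_{Ω_o} (∂_yφ)²)` with `T = ∫_0^{x_M} φ(x,ζ(x))² dx`.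
If `|f| ≤ M`, then `∫_{Ω_o} f² ≤ M² x_M d_o` because `|Ω_o| ≤ x_M d_o`, and a second
Cauchy–Schwarz bounds `|∫_{Ω_o} f φ|` by `√(2 x_M) d_o M (T + d_o ∫_{Ω_o} (∂_yφ)²)^{1/2}`;
finally `d_o ≤ 1 ≤ 1 / h`. -/

section SquareIntegrals

variable {α : Type*} [MeasurableSpace α] {μ : Measure α} {f g : α → ℝ}

lemma setIntegral_sq_le_of_abs_le {s : Set α} {M : ℝ} (hs : μ s < ⊤) (hf : ∀ x ∈ s, |f x| ≤ M) :
    ∫ x in s, f x ^ 2 ∂μ ≤ M ^ 2 * μ.real s := by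
  have hsq : ∀ x ∈ s, ‖f x ^ 2‖ ≤ M ^ 2 := fun x hx => by
    simpa only [norm_pow] using pow_le_pow_left₀ (norm_nonneg _) (hf x hx) 2
  exact (le_abs_self _).trans (norm_setIntegral_le_of_norm_le_const hs hsq)

lemma sq_integral_mul_le (hf : MemLp f 2 μ) (hg : MemLp g 2 μ) :
    (∫ a, f a * g a ∂μ) ^ 2 ≤ (∫ a, f a ^ 2 ∂μ) * ∫ a, g a ^ 2 ∂μ := by
  have inner_toLp {u v : α → ℝ} (hu : MemLp u 2 μ) (hv : MemLp v 2 μ) :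
      inner ℝ (hu.toLp u) (hv.toLp v) = ∫ a, u a * v a ∂μ := by
    rw [L2.inner_def]
    refine integral_congr_ae ?_
    filter_upwards [hu.coeFn_toLp, hv.coeFn_toLp] with a hua hva
    rw [hua, hva, Real.inner_apply]
  simpa only [inner_toLp, ← sq] using real_inner_mul_inner_self_le (hf.toLp f) (hg.toLp g)

end SquareIntegrals

section Segment

variable {a b : ℝ} {ψ : ℝ → ℝ}

lemma sq_sub_le_mul_integral_sq_deriv (hab : a ≤ b) (hψ : ContinuousOn ψ (Icc a b))
    (hd : DifferentiableOn ℝ ψ (Ioo a b)) (hi : IntegrableOn (fun y => deriv ψ y ^ 2) (Ioo a b)) :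
    (ψ b - ψ a) ^ 2 ≤ (b - a) * ∫ y in Ioo a b, deriv ψ y ^ 2 := by
  have hL2 : MemLp (deriv ψ) 2 (volume.restrict (Ioo a b)) :=
    (memLp_two_iff_integrable_sq (measurable_deriv ψ).aestronglyMeasurable).2 hi
  have hftc : ∫ y in Ioo a b, deriv ψ y = ψ b - ψ a := by
    rw [← integral_Ioc_eq_integral_Ioo, ← intervalIntegral.integral_of_le hab]
    refine intervalIntegral.integral_eq_sub_of_hasDerivAt_of_le hab hψ
      (fun y hy => (hd.differentiableAt (Ioo_mem_nhds hy.1 hy.2)).hasDerivAt) ?_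
    exact (intervalIntegrable_iff_integrableOn_Ioo_of_le hab).2 (hL2.integrable one_le_two)
  simpa [hftc, hab] using sq_integral_mul_le (memLp_const (1 : ℝ)) hL2

lemma integral_sq_le_right_endpoint_add_deriv (hab : a ≤ b) (hψ : ContinuousOn ψ (Icc a b))
    (hd : DifferentiableOn ℝ ψ (Ioo a b)) (hi : IntegrableOn (fun y => deriv ψ y ^ 2) (Ioo a b)) :
    ∫ y in Ioo a b, ψ y ^ 2 ≤
      2 * (b - a) * ψ b ^ 2 + 2 * (b - a) ^ 2 * ∫ y in Ioo a b, deriv ψ y ^ 2 := by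
  set D := ∫ y in Ioo a b, deriv ψ y ^ 2
  have pointwise : ∀ y ∈ Ioo a b, ψ y ^ 2 ≤ 2 * ψ b ^ 2 + 2 * ((b - a) * D) := by
    intro y hy
    have hsub : Ioo y b ⊆ Ioo a b := Ioo_subset_Ioo_left hy.1.le
    have increment : (ψ b - ψ y) ^ 2 ≤ (b - a) * D :=
      calc (ψ b - ψ y) ^ 2 ≤ (b - y) * ∫ t in Ioo y b, deriv ψ t ^ 2 :=
            sq_sub_le_mul_integral_sq_deriv hy.2.le (hψ.mono (Icc_subset_Icc_left hy.1.le))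
              (hd.mono hsub) (hi.mono_set hsub)
        _ ≤ (b - a) * D :=
            mul_le_mul (by linarith [hy.1])
              (setIntegral_mono_set hi (.of_forall fun t => sq_nonneg _) hsub.eventuallyLE)
              (integral_nonneg fun t => sq_nonneg _) (sub_nonneg.2 hab)
    calc ψ y ^ 2 ≤ 2 * ψ b ^ 2 + 2 * (ψ b - ψ y) ^ 2 := by
          linarith [sq_nonneg (2 * ψ b - ψ y)]
      _ ≤ 2 * ψ b ^ 2 + 2 * ((b - a) * D) := by gcongr
  have hψi : IntegrableOn (fun y => ψ y ^ 2) (Ioo a b) :=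
    ((hψ.pow 2).integrableOn_compact isCompact_Icc).mono_set Ioo_subset_Icc_self
  calc ∫ y in Ioo a b, ψ y ^ 2 ≤ ∫ _ in Ioo a b, (2 * ψ b ^ 2 + 2 * ((b - a) * D)) :=
        setIntegral_mono_on hψi (integrable_const _) measurableSet_Ioo pointwise
    _ = 2 * (b - a) * ψ b ^ 2 + 2 * (b - a) ^ 2 * D := by
        rw [setIntegral_const, Real.volume_real_Ioo_of_le hab, smul_eq_mul]
        ring

end Segment

section RegionBetween

variable {α : Type*} {s : Set α} {a b : α → ℝ}

lemma indicator_regionBetween_apply {E : Type*} [Zero E] (g : α × ℝ → E) (x : α) (y : ℝ) :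
    (regionBetween a b s).indicator g (x, y) =
      s.indicator (fun x => (Ioo (a x) (b x)).indicator (fun y => g (x, y)) y) x := by
  by_cases hx : x ∈ s <;> simp [regionBetween, indicator, hx]

section Fubini

variable {E : Type*} [NormedAddCommGroup E] [NormedSpace ℝ E] {g : α × ℝ → E}

lemma integral_indicator_regionBetween (x : α) :
    ∫ y, (regionBetween a b s).indicator g (x, y) =
      s.indicator (fun x => ∫ y in Ioo (a x) (b x), g (x, y)) x := by
  by_cases hx : x ∈ s <;> simp [indicator_regionBetween_apply, hx, integral_indicator]

variable [MeasurableSpace α] {μ : Measure α}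

lemma integrableOn_integral_slice_of_regionBetween (hs : MeasurableSet s)
    (hR : NullMeasurableSet (regionBetween a b s) (μ.prod volume))
    (hg : IntegrableOn g (regionBetween a b s) (μ.prod volume)) :
    IntegrableOn (fun x => ∫ y in Ioo (a x) (b x), g (x, y)) s μ := by
  rw [← integrable_indicator_iff hs]
  simpa only [integral_indicator_regionBetween] using
    (hg.integrable_indicator₀ hR).integral_prod_left

lemma setIntegral_regionBetween [SFinite μ] (hs : MeasurableSet s)
    (hR : NullMeasurableSet (regionBetween a b s) (μ.prod volume))
    (hg : IntegrableOn g (regionBetween a b s) (μ.prod volume)) :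
    ∫ p in regionBetween a b s, g p ∂μ.prod volume =
      ∫ x in s, (∫ y in Ioo (a x) (b x), g (x, y)) ∂μ := by
  rw [← integral_indicator₀ hR, integral_prod _ (hg.integrable_indicator₀ hR),
    ← integral_indicator hs]
  simp only [integral_indicator_regionBetween]

end Fubini

variable [MeasurableSpace α] {μ : Measure α} [SFinite μ]

lemma ae_integrableOn_slice_of_regionBetween {E : Type*} [NormedAddCommGroup E] {g : α × ℝ → E}
    (hs : MeasurableSet s)
    (hR : NullMeasurableSet (regionBetween a b s) (μ.prod volume))
    (hg : IntegrableOn g (regionBetween a b s) (μ.prod volume)) :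
    ∀ᵐ x ∂μ.restrict s, IntegrableOn (fun y => g (x, y)) (Ioo (a x) (b x)) := by
  rw [ae_restrict_iff' hs]
  filter_upwards [(hg.integrable_indicator₀ hR).prod_right_ae] with x hgx hx
  simpa only [indicator_regionBetween_apply, indicator_of_mem hx,
    integrable_indicator_iff measurableSet_Ioo] using hgx

lemma setIntegral_regionBetween_sq_le {d : ℝ} {φ : α × ℝ → ℝ} (hs : MeasurableSet s)
    (hR : NullMeasurableSet (regionBetween a b s) (μ.prod volume))
    (hab : ∀ x ∈ s, a x ≤ b x) (hd : ∀ x ∈ s, b x - a x ≤ d)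
    (hφ : ∀ x ∈ s, ContinuousOn (fun y => φ (x, y)) (Icc (a x) (b x)))
    (hφ' : ∀ x ∈ s, DifferentiableOn ℝ (fun y => φ (x, y)) (Ioo (a x) (b x)))
    (hφi : IntegrableOn (fun p => φ p ^ 2) (regionBetween a b s) (μ.prod volume))
    (hφ'i : IntegrableOn (fun p => deriv (fun y => φ (p.1, y)) p.2 ^ 2) (regionBetween a b s)
      (μ.prod volume))
    (hT : IntegrableOn (fun x => φ (x, b x) ^ 2) s μ) :
    ∫ p in regionBetween a b s, φ p ^ 2 ∂μ.prod volume ≤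
      2 * d * (∫ x in s, φ (x, b x) ^ 2 ∂μ) +
        2 * d ^ 2 * ∫ p in regionBetween a b s,
          deriv (fun y => φ (p.1, y)) p.2 ^ 2 ∂μ.prod volume := by
  have hD := integrableOn_integral_slice_of_regionBetween hs hR hφ'i
  rw [setIntegral_regionBetween hs hR hφi, setIntegral_regionBetween hs hR hφ'i,
    ← integral_const_mul, ← integral_const_mul,
    ← integral_add (hT.const_mul _) (hD.const_mul _)]
  refine integral_mono_ae (integrableOn_integral_slice_of_regionBetween hs hR hφi)
    ((hT.const_mul _).add (hD.const_mul _)) ?_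
  filter_upwards [ae_restrict_mem hs, ae_integrableOn_slice_of_regionBetween hs hR hφ'i]
    with x hx hDx
  have hlen : 0 ≤ b x - a x := sub_nonneg.2 (hab x hx)
  refine (integral_sq_le_right_endpoint_add_deriv (hab x hx) (hφ x hx) (hφ' x hx) hDx).trans ?_
  gcongr <;> exact hd x hx

end RegionBetween

section Overlap

variable {xM dO : ℝ} {ζ : ℝ → ℝ} {φ : ℝ × ℝ → ℝ}

lemma ovl_eq_regionBetween (xM : ℝ) (ζ : ℝ → ℝ) : ovl xM ζ = regionBetween 0 ζ (Ioo 0 xM) := by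
  ext p
  simp only [ovl, regionBetween, mem_ofPred_eq, mem_Ioo, Pi.zero_apply, and_assoc]

lemma nullMeasurableSet_ovl (hζ : AEMeasurable ζ (volume.restrict (Ioo 0 xM))) :
    NullMeasurableSet (ovl xM ζ) := by
  have hind : ovl xM ζ = regionBetween 0 ((Ioo 0 xM).indicator ζ) (Ioo 0 xM) := by
    rw [ovl_eq_regionBetween]
    ext p
    simp +contextual [regionBetween]
  rw [hind]
  exact nullMeasurableSet_regionBetween volume aemeasurable_const
    ((aemeasurable_indicator_iff measurableSet_Ioo).2 hζ) measurableSet_Ioo.nullMeasurableSet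

lemma ovl_subset_Ioo_prod_Ioo (hζ : ∀ x ∈ Ioo 0 xM, ζ x ≤ dO) :
    ovl xM ζ ⊆ Ioo 0 xM ×ˢ Ioo 0 dO := fun p ⟨hx0, hxM, hy0, hyζ⟩ =>
  ⟨⟨hx0, hxM⟩, hy0, hyζ.trans_le (hζ p.1 ⟨hx0, hxM⟩)⟩

lemma isCompact_closure_ovl (hζ : ∀ x ∈ Ioo 0 xM, ζ x ≤ dO) : IsCompact (closure (ovl xM ζ)) :=
  (isCompact_Icc.prod isCompact_Icc).closure_of_subset <|
    (ovl_subset_Ioo_prod_Ioo hζ).trans (prod_mono Ioo_subset_Icc_self Ioo_subset_Icc_self)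

lemma integrableOn_ovl_of_continuousOn_closure (hζ : ∀ x ∈ Ioo 0 xM, ζ x ≤ dO)
    (hφ : ContinuousOn φ (closure (ovl xM ζ))) : IntegrableOn φ (ovl xM ζ) :=
  (hφ.integrableOn_compact (isCompact_closure_ovl hζ)).mono_set subset_closure

lemma measure_ovl_lt_top (hζ : ∀ x ∈ Ioo 0 xM, ζ x ≤ dO) : volume (ovl xM ζ) < ⊤ :=
  (measure_mono subset_closure).trans_lt (isCompact_closure_ovl hζ).measure_lt_top

lemma volume_real_ovl_le (hxM : 0 ≤ xM) (hdO : 0 ≤ dO) (hζ : ∀ x ∈ Ioo 0 xM, ζ x ≤ dO) :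
    volume.real (ovl xM ζ) ≤ xM * dO := by
  have hbox : volume.real (Ioo 0 xM ×ˢ Ioo 0 dO) = xM * dO := by
    rw [Measure.volume_eq_prod, measureReal_prod_prod, Real.volume_real_Ioo_of_le hxM,
      Real.volume_real_Ioo_of_le hdO, sub_zero, sub_zero]
  rw [← hbox]
  exact measureReal_mono (ovl_subset_Ioo_prod_Ioo hζ)
    ((Metric.isBounded_Ioo 0 xM).prod (Metric.isBounded_Ioo 0 dO)).measure_lt_top.ne

lemma mk_mem_closure_ovl {x y : ℝ} (hx : x ∈ Ioo 0 xM) (hζ : 0 < ζ x) (hy : y ∈ Icc 0 (ζ x)) :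
    (x, y) ∈ closure (ovl xM ζ) := by
  have hslice : MapsTo (fun t : ℝ => (x, t)) (Ioo 0 (ζ x)) (ovl xM ζ) :=
    fun t ht => ⟨hx.1, hx.2, ht.1, ht.2⟩
  refine hslice.closure (by fun_prop) ?_
  rwa [closure_Ioo hζ.ne]

lemma integrableOn_sq_trace_ovl (hζm : AEMeasurable ζ (volume.restrict (Ioo 0 xM)))
    (hζ : ∀ x ∈ Ioo 0 xM, 0 < ζ x ∧ ζ x ≤ dO) (hφ : ContinuousOn φ (closure (ovl xM ζ))) :
    IntegrableOn (fun x => φ (x, ζ x) ^ 2) (Ioo 0 xM) := by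
  set K := closure (ovl xM ζ)
  have hK : IsCompact K := isCompact_closure_ovl fun x hx => (hζ x hx).2
  have hgraph : ∀ x ∈ Ioo 0 xM, (x, ζ x) ∈ K := fun x hx =>
    mk_mem_closure_ovl hx (hζ x hx).1 ⟨(hζ x hx).1.le, le_rfl⟩
  classical
  have hφK : Measurable (K.indicator φ) := by
    rw [← piecewise_eq_indicator]
    exact hφ.measurable_piecewise continuousOn_const isClosed_closure.measurableSet
  have hmeas : AEMeasurable (fun x => φ (x, ζ x) ^ 2) (volume.restrict (Ioo 0 xM)) := by
    refine ((hφK.comp_aemeasurable (aemeasurable_id.prodMk hζm)).pow_const 2).congr ?_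
    filter_upwards [ae_restrict_mem measurableSet_Ioo] with x hx
    simp [hgraph x hx]
  obtain ⟨C, hC⟩ := hK.exists_bound_of_continuousOn (hφ.pow 2)
  refine .of_bound measure_Ioo_lt_top hmeas.aestronglyMeasurable C ?_
  filter_upwards [ae_restrict_mem measurableSet_Ioo] with x hx using hC _ (hgraph x hx)

lemma setIntegral_ovl_sq_le (hζm : AEMeasurable ζ (volume.restrict (Ioo 0 xM)))
    (hζ : ∀ x ∈ Ioo 0 xM, 0 < ζ x ∧ ζ x ≤ dO) (hφ : ContinuousOn φ (closure (ovl xM ζ)))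
    (hφ' : ∀ p ∈ ovl xM ζ, DifferentiableAt ℝ (fun y => φ (p.1, y)) p.2)
    (hφ'i : IntegrableOn (fun p => pdy φ p ^ 2) (ovl xM ζ)) :
    ∫ p in ovl xM ζ, φ p ^ 2 ≤
      2 * dO * (∫ x in Ioo 0 xM, φ (x, ζ x) ^ 2) + 2 * dO ^ 2 * ∫ p in ovl xM ζ, pdy φ p ^ 2 := by
  have hφi : IntegrableOn (fun p => φ p ^ 2) (ovl xM ζ) :=
    integrableOn_ovl_of_continuousOn_closure (fun x hx => (hζ x hx).2) (hφ.pow 2)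
  have hm := nullMeasurableSet_ovl hζm
  rw [ovl_eq_regionBetween] at hm hφi hφ'i ⊢
  refine setIntegral_regionBetween_sq_le measurableSet_Ioo hm (fun x hx => (hζ x hx).1.le)
    (fun x hx => by simpa using (hζ x hx).2) (fun x hx => ?_) (fun x hx y hy => ?_) hφi hφ'i
    (integrableOn_sq_trace_ovl hζm hζ hφ)
  · exact hφ.comp (by fun_prop) fun y hy => mk_mem_closure_ovl hx (hζ x hx).1 hy
  · exact (hφ' (x, y) ⟨hx.1, hx.2, hy.1, hy.2⟩).differentiableWithinAt

end Overlap

section PartialDerivatives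

variable {φ : ℝ × ℝ → ℝ} {p : ℝ × ℝ}

lemma hasDerivAt_fst_slice (hφ : DifferentiableAt ℝ φ p) :
    HasDerivAt (fun t => φ (t, p.2)) (fderiv ℝ φ p (1, 0)) p.1 :=
  hφ.hasFDerivAt.comp_hasDerivAt (f := fun t => (t, p.2)) p.1
    ((hasDerivAt_id p.1).prodMk (hasDerivAt_const p.1 p.2))

lemma hasDerivAt_snd_slice (hφ : DifferentiableAt ℝ φ p) :
    HasDerivAt (fun t => φ (p.1, t)) (fderiv ℝ φ p (0, 1)) p.2 :=
  hφ.hasFDerivAt.comp_hasDerivAt (f := fun t => (p.1, t)) p.2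
    ((hasDerivAt_const p.2 p.1).prodMk (hasDerivAt_id p.2))

variable {U : Set (ℝ × ℝ)}

lemma differentiableAt_of_contDiffOn_isOpen (hU : IsOpen U) (hφ : ContDiffOn ℝ 1 φ U)
    (hp : p ∈ U) : DifferentiableAt ℝ φ p :=
  hφ.differentiableOn_one.differentiableAt (hU.mem_nhds hp)

lemma continuousOn_pdx (hU : IsOpen U) (hφ : ContDiffOn ℝ 1 φ U) : ContinuousOn (pdx φ) U :=
  ((hφ.continuousOn_fderiv_of_isOpen hU le_rfl).clm_apply continuousOn_const).congr fun _ hp =>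
    (hasDerivAt_fst_slice (differentiableAt_of_contDiffOn_isOpen hU hφ hp)).deriv

lemma continuousOn_pdy (hU : IsOpen U) (hφ : ContDiffOn ℝ 1 φ U) : ContinuousOn (pdy φ) U :=
  ((hφ.continuousOn_fderiv_of_isOpen hU le_rfl).clm_apply continuousOn_const).congr fun _ hp =>
    (hasDerivAt_snd_slice (differentiableAt_of_contDiffOn_isOpen hU hφ hp)).deriv

variable {xM dO : ℝ} {ζ : ℝ → ℝ}

lemma integrableOn_sq_pdx_ovl (hζ : ∀ x ∈ Ioo 0 xM, ζ x ≤ dO) (hU : IsOpen U)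
    (hcl : closure (ovl xM ζ) ⊆ U) (hφ : ContDiffOn ℝ 1 φ U) :
    IntegrableOn (fun p => pdx φ p ^ 2) (ovl xM ζ) :=
  integrableOn_ovl_of_continuousOn_closure hζ (((continuousOn_pdx hU hφ).mono hcl).pow 2)

lemma integrableOn_sq_pdy_ovl (hζ : ∀ x ∈ Ioo 0 xM, ζ x ≤ dO) (hU : IsOpen U)
    (hcl : closure (ovl xM ζ) ⊆ U) (hφ : ContDiffOn ℝ 1 φ U) :
    IntegrableOn (fun p => pdy φ p ^ 2) (ovl xM ζ) :=
  integrableOn_ovl_of_continuousOn_closure hζ (((continuousOn_pdy hU hφ).mono hcl).pow 2)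

lemma setIntegral_ovl_sq_pdy_le_gradSq (hζ : ∀ x ∈ Ioo 0 xM, ζ x ≤ dO) (hU : IsOpen U)
    (hcl : closure (ovl xM ζ) ⊆ U) (hφ : ContDiffOn ℝ 1 φ U) :
    ∫ p in ovl xM ζ, pdy φ p ^ 2 ≤ ∫ p in ovl xM ζ, gradSq φ p :=
  have hpdy := integrableOn_sq_pdy_ovl hζ hU hcl hφ
  integral_mono hpdy ((integrableOn_sq_pdx_ovl hζ hU hcl hφ).add hpdy)
    fun _ => le_add_of_nonneg_left (sq_nonneg _)

end PartialDerivatives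

theorem corollary_f_phi_overlap_general {xM dO M : ℝ} (hxM : 0 < xM) {ζ : ℝ → ℝ}
    (hζm : AEMeasurable ζ (volume.restrict (Ioo 0 xM)))
    (hζ : ∀ x ∈ Ioo 0 xM, 0 < ζ x ∧ ζ x ≤ dO) {f φ : ℝ × ℝ → ℝ}
    (hf : AEStronglyMeasurable f (volume.restrict (ovl xM ζ))) (hfM : ∀ p ∈ ovl xM ζ, |f p| ≤ M)
    (hφ : ContinuousOn φ (closure (ovl xM ζ)))
    (hφ' : ∀ p ∈ ovl xM ζ, DifferentiableAt ℝ (fun y => φ (p.1, y)) p.2)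
    (hφ'i : IntegrableOn (fun p => pdy φ p ^ 2) (ovl xM ζ)) :
    |∫ p in ovl xM ζ, f p * φ p| ≤ √(2 * xM) * dO * M *
      √(dO * (∫ p in ovl xM ζ, pdy φ p ^ 2) + ∫ x in Ioo 0 xM, φ (x, ζ x) ^ 2) := by
  have hmid : xM / 2 ∈ Ioo 0 xM := ⟨half_pos hxM, half_lt_self hxM⟩
  obtain ⟨hζ0, hζle⟩ := hζ _ hmid
  have hdO : 0 ≤ dO := hζ0.le.trans hζle
  have hM : 0 ≤ M := (abs_nonneg _).trans <|
    hfM (xM / 2, ζ (xM / 2) / 2) ⟨hmid.1, hmid.2, half_pos hζ0, half_lt_self hζ0⟩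
  have hζd : ∀ x ∈ Ioo 0 xM, ζ x ≤ dO := fun x hx => (hζ x hx).2
  have hfin : volume (ovl xM ζ) < ⊤ := measure_ovl_lt_top hζd
  have : IsFiniteMeasure (volume.restrict (ovl xM ζ)) := isFiniteMeasure_restrict.2 hfin.ne
  have hφL2 : MemLp φ 2 (volume.restrict (ovl xM ζ)) :=
    (memLp_two_iff_integrable_sq
      (integrableOn_ovl_of_continuousOn_closure hζd hφ).aestronglyMeasurable).2
      (integrableOn_ovl_of_continuousOn_closure hζd (hφ.pow 2))
  have hfL2 : MemLp f 2 (volume.restrict (ovl xM ζ)) :=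
    .of_bound hf M ((ae_restrict_mem₀ (nullMeasurableSet_ovl hζm)).mono hfM)
  have hfsq : ∫ p in ovl xM ζ, f p ^ 2 ≤ M ^ 2 * (xM * dO) :=
    calc ∫ p in ovl xM ζ, f p ^ 2 ≤ M ^ 2 * volume.real (ovl xM ζ) :=
          setIntegral_sq_le_of_abs_le hfin hfM
      _ ≤ M ^ 2 * (xM * dO) := by gcongr; exact volume_real_ovl_le hxM.le hdO hζd
  set T := ∫ x in Ioo 0 xM, φ (x, ζ x) ^ 2
  set D := ∫ p in ovl xM ζ, pdy φ p ^ 2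
  have hsq : (∫ p in ovl xM ζ, f p * φ p) ^ 2 ≤ 2 * xM * (dO * M) ^ 2 * (dO * D + T) :=
    calc _ ≤ (∫ p in ovl xM ζ, f p ^ 2) * ∫ p in ovl xM ζ, φ p ^ 2 := sq_integral_mul_le hfL2 hφL2
      _ ≤ M ^ 2 * (xM * dO) * (2 * dO * T + 2 * dO ^ 2 * D) :=
          mul_le_mul hfsq (setIntegral_ovl_sq_le hζm hζ hφ hφ' hφ'i)
            (integral_nonneg fun p => sq_nonneg _) (by positivity)
      _ = _ := by ring
  have := Real.abs_le_sqrt hsq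
  rwa [Real.sqrt_mul (by positivity), Real.sqrt_mul (by positivity), Real.sqrt_sq (by positivity),
    ← mul_assoc] at this

/-- Corollary 1(a) of the paper. For every `x_M > 0` there is a
constant `c > 0`, depending only on `x_M`, such that
`|∫_{Ω_o} f φ| ≤ c d_o (sup_{Ω_o}|f|) ( ∫_{Ω_o} |∇φ|² + (1/h) ∫_0^{x_M} φ(x,ζ(x))² dx )^{1/2}`,
where the supremum of `|f|` is expressed through any bound `M` with `|f| ≤ M` on `Ω_o`. -/
theorem corollary_f_phi_overlap (xM : ℝ) (hxM : 0 < xM) :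
    ∃ c : ℝ, 0 < c ∧
      ∀ (h dO : ℝ), 0 < h → h ≤ 1 → 0 < dO → dO ≤ h →
      ∀ ζ : ℝ → ℝ, ContinuousOn ζ (Icc 0 xM) →
        (∀ x ∈ Icc 0 xM, 0 < ζ x ∧ ζ x ≤ dO) →
      ∀ f : ℝ × ℝ → ℝ, Measurable f →
      ∀ M : ℝ, 0 ≤ M → (∀ p ∈ ovl xM ζ, |f p| ≤ M) →
      ∀ (U : Set (ℝ × ℝ)), IsOpen U → closure (ovl xM ζ) ⊆ U →
      ∀ φ : ℝ × ℝ → ℝ, ContDiffOn ℝ 1 φ U →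
        |∫ p in ovl xM ζ, f p * φ p| ≤
          c * dO * M * Real.sqrt ((∫ p in ovl xM ζ, gradSq φ p) +
            (1 / h) * ∫ x in Ioo (0 : ℝ) xM, (φ (x, ζ x)) ^ 2) := by
  refine ⟨√(2 * xM), by positivity, ?_⟩
  intro h dO hh hh1 hdO hdh ζ hζc hζ f hf M hM hfM U hU hcl φ hφ
  have hζ' : ∀ x ∈ Ioo 0 xM, 0 < ζ x ∧ ζ x ≤ dO := fun x hx => hζ x (Ioo_subset_Icc_self hx)
  have hζd : ∀ x ∈ Ioo 0 xM, ζ x ≤ dO := fun x hx => (hζ' x hx).2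
  have hdiff : ∀ p ∈ ovl xM ζ, DifferentiableAt ℝ (fun y => φ (p.1, y)) p.2 := fun p hp =>
    (hasDerivAt_snd_slice (differentiableAt_of_contDiffOn_isOpen hU hφ
      (hcl (subset_closure hp)))).differentiableAt
  refine (corollary_f_phi_overlap_general hxM
    ((hζc.mono Ioo_subset_Icc_self).aemeasurable measurableSet_Ioo) hζ' hf.aestronglyMeasurable hfM
    (hφ.continuousOn.mono hcl) hdiff (integrableOn_sq_pdy_ovl hζd hU hcl hφ)).trans ?_
  gcongr ?_ * √(?_ + ?_)
  · exact (mul_le_of_le_one_left (integral_nonneg fun p => sq_nonneg _) (hdh.trans hh1)).trans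
      (setIntegral_ovl_sq_pdy_le_gradSq hζd hU hcl hφ)
  · exact le_mul_of_one_le_left (integral_nonneg fun x => sq_nonneg _) (one_le_one_div hh hh1)
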